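/- Let X be a complex Banach space with a Schauder basis {eₙ}ₙ. Then the mapping Φ : 𝓗𝓛₀(B_X) → 𝓗^∞_s(B_X, X*), Φ(f) = df, is a surjective isometry, where 𝓗^∞_s(B_X, X*) = { g ∈ 𝓗^∞(B_X, X*) : e_k∘d(e_n∘g) = e_n∘d(e_k∘g) for all n, k ∈ ℕ }. -/

import Mathlib

/-!
The substance is that the differential of a holomorphic map between complex normed spaces is again
holomorphic. On a ball where `f` is bounded, the Schwarz lemma gives a Cauchy estimate for `df` and
a quadratic bound for the Taylor remainder `f (x + h) - f x - df x h`, both uniform in `x`. Hence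
the difference quotients of `f` in a direction `v` converge uniformly to `z ↦ df z v`, which is
therefore holomorphic by a Weierstrass-type theorem. Differentiating the Taylor remainder in `x` and
applying the Cauchy estimate to it gives `df (c + h) - df c - D h = O(‖h‖ ^ 2)`, where `D h` is the
differential at `c` of `z ↦ df z h`.

Symmetry of the second differential then gives the relations defining `𝓗^∞_s`. Conversely these
relations say that `dg` is symmetric on a set with dense span, so `g` is a closed `1`-form and the
Poincaré lemma on a convex set provides a primitive. The isometry is the mean value inequality.
-/

open Filter Topology Metric Set

theorem exists_ball_subset_forall_norm_le {α F : Type*} [PseudoMetricSpace α]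
    [SeminormedAddCommGroup F] {f : α → F} {s : Set α} {c : α}
    (hs : s ∈ 𝓝 c) (hf : ContinuousAt f c) :
    ∃ r > 0, ∃ M, ball c r ⊆ s ∧ ∀ x ∈ ball c r, ‖f x‖ ≤ M := by
  have hbound : ∀ᶠ x in 𝓝 c, ‖f x‖ < ‖f c‖ + 1 :=
    hf.norm.eventually_lt_const (lt_add_one _)
  obtain ⟨r, hr, hball⟩ := Metric.mem_nhds_iff.1 (inter_mem hs hbound)
  exact ⟨r, hr, ‖f c‖ + 1, fun x hx ↦ (hball hx).1, fun x hx ↦ (hball hx).2.le⟩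

theorem eventually_norm_smul_lt {𝕜 E : Type*} [NontriviallyNormedField 𝕜] [SeminormedAddCommGroup E]
    [NormedSpace 𝕜 E] (v : E) {ε : ℝ} (hε : 0 < ε) : ∀ᶠ t : 𝕜 in 𝓝[≠] 0, ‖t • v‖ < ε :=
  (Continuous.tendsto' (by fun_prop) 0 0 (by simp)).mono_left nhdsWithin_le_nhds
    |>.eventually_lt_const hε

theorem add_mem_ball_of_mem_ball_half {E : Type*} [SeminormedAddCommGroup E] {c x h : E} {r : ℝ}
    (hx : x ∈ ball c (r / 2)) (hh : ‖h‖ < r / 2) : x + h ∈ ball c r :=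
  ball_half_subset _ hx (by simpa using hh)

section Calculus

variable {𝕜 E F : Type*} [NontriviallyNormedField 𝕜] [NormedAddCommGroup E] [NormedSpace 𝕜 E]
  [NormedAddCommGroup F] [NormedSpace 𝕜 F]

theorem hasFDerivAt_of_eventually_norm_sub_le {f : E → F} {f' : E →L[𝕜] F} {c : E} {C : ℝ}
    (h : ∀ᶠ z in 𝓝 c, ‖f z - f c - f' (z - c)‖ ≤ C * ‖z - c‖ ^ 2) : HasFDerivAt f f' c := by
  have hO : (fun z ↦ f z - f c - f' (z - c)) =O[𝓝 c] fun z ↦ ‖z - c‖ ^ 2 :=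
    .of_bound C (by simpa using h)
  exact .of_isLittleO (hO.trans_isLittleO (Asymptotics.isLittleO_pow_sub_sub c one_lt_two))

theorem fderiv_clm_apply_const {G : Type*} [NormedAddCommGroup G] [NormedSpace 𝕜 G]
    {g : E → G →L[𝕜] F} {z : E} (hg : DifferentiableAt 𝕜 g z) (v : G) (w : E) :
    fderiv 𝕜 (fun u ↦ g u v) z w = fderiv 𝕜 g z w v := by
  simp [fderiv_clm_apply hg (differentiableAt_const v)]

end Calculus

section Holomorphic

variable {E F : Type*} [NormedAddCommGroup E] [NormedSpace ℂ E]
  [NormedAddCommGroup F] [NormedSpace ℂ F] {f : E → F} {s : Set E} {c : E} {r M : ℝ}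

theorem norm_fderiv_le_of_forall_mem_ball_norm_le (hr : 0 < r)
    (hf : DifferentiableOn ℂ f (ball c r)) (hM : ∀ x ∈ ball c r, ‖f x‖ ≤ M) :
    ‖fderiv ℂ f c‖ ≤ 2 * M / r := by
  refine Complex.norm_fderiv_le_div_of_mapsTo_ball hf (fun x hx ↦ ?_) hr
  rw [mem_closedBall, dist_eq_norm, two_mul]
  exact norm_sub_le_of_le (hM x hx) (hM c (mem_ball_self hr))

theorem norm_taylor_remainder_le_of_forall_mem_ball_norm_le
    (hf : DifferentiableOn ℂ f (ball c r)) (hM : ∀ x ∈ ball c r, ‖f x‖ ≤ M) {z : E}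
    (hz : z ∈ ball c r) :
    ‖f z - f c - fderiv ℂ f c (z - c)‖ ≤ 4 * M * (‖z - c‖ / r) ^ 2 := by
  have hr : 0 < r := nonempty_ball.1 ⟨z, hz⟩
  have hfc : HasFDerivAt f (fderiv ℂ f c) c :=
    (hf.differentiableAt (ball_mem_nhds c hr)).hasFDerivAt
  let g : E → F := fun w ↦ f w - fderiv ℂ f c (w - c)
  have hgc : g c = f c := by simp [g]
  have hg_sub (w : E) : g w - g c = f w - f c - fderiv ℂ f c (w - c) := by
    rw [hgc]; exact sub_right_comm ..
  have hg : DifferentiableOn ℂ g (ball c r) := hf.sub (by fun_prop)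
  have hg_maps : MapsTo g (ball c r) (closedBall (g c) (4 * M)) := by
    intro w hw
    have hlin : ‖fderiv ℂ f c (w - c)‖ ≤ 2 * M := calc
      ‖fderiv ℂ f c (w - c)‖ ≤ 2 * M / r * r :=
        (fderiv ℂ f c).le_of_opNorm_le_of_le
          (norm_fderiv_le_of_forall_mem_ball_norm_le hr hf hM) (mem_ball_iff_norm.1 hw).le
      _ = 2 * M := div_mul_cancel₀ _ hr.ne'
    rw [mem_closedBall, dist_eq_norm, hg_sub]
    linarith [norm_sub_le_of_le (norm_sub_le_of_le (hM w hw) (hM c (mem_ball_self hr))) hlin]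
  have hg_littleO : (g · - g c) =o[𝓝 c] fun w ↦ ‖w - c‖ ^ 1 := by
    simpa only [hg_sub, pow_one] using hfc.isLittleO.norm_right
  simpa only [dist_eq_norm, hg_sub] using
    Complex.dist_le_mul_div_pow_of_mapsTo_ball_of_isLittleO hg hg_maps hg_littleO hz

section Weierstrass

variable {ι : Type*} {l : Filter ι} {u : ι → E → F} {g : E → F}

theorem cauchy_map_fderiv_of_tendstoUniformlyOn [l.NeBot] (hr : 0 < r)
    (hu : ∀ᶠ i in l, DifferentiableOn ℂ (u i) (ball c r))
    (hlim : TendstoUniformlyOn u g l (ball c r)) :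
    Cauchy (map (fun i ↦ fderiv ℂ (u i) c) l) := by
  refine Metric.cauchy_iff.2 ⟨inferInstance, fun ε hε ↦ ?_⟩
  have hclose := (Metric.tendstoUniformlyOn_iff.1 hlim (ε * r / 8) (by positivity)).and hu
  refine ⟨_, image_mem_map hclose, ?_⟩
  rintro _ ⟨i, ⟨hi, hui⟩, rfl⟩ _ ⟨j, ⟨hj, huj⟩, rfl⟩
  have hij : ∀ y ∈ ball c r, ‖(u i - u j) y‖ ≤ ε * r / 4 := fun y hy ↦ by
    rw [Pi.sub_apply, ← dist_eq_norm]
    linarith [hi y hy, hj y hy, dist_triangle_left (u i y) (u j y) (g y)]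
  have hc := ball_mem_nhds c hr
  calc dist (fderiv ℂ (u i) c) (fderiv ℂ (u j) c)
      = ‖fderiv ℂ (u i - u j) c‖ := by
        rw [dist_eq_norm, fderiv_sub (hui.differentiableAt hc) (huj.differentiableAt hc)]
    _ ≤ 2 * (ε * r / 4) / r := norm_fderiv_le_of_forall_mem_ball_norm_le hr (hui.sub huj) hij
    _ = ε / 2 := by field
    _ < ε := half_lt_self hε

theorem hasFDerivAt_of_tendsto_of_forall_norm_le [l.NeBot] {g' : E →L[ℂ] F} (hr : 0 < r)
    (hu : ∀ᶠ i in l, DifferentiableOn ℂ (u i) (ball c r))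
    (hM : ∀ᶠ i in l, ∀ x ∈ ball c r, ‖u i x‖ ≤ M)
    (hlim : ∀ x ∈ ball c r, Tendsto (u · x) l (𝓝 (g x)))
    (hlim' : Tendsto (fun i ↦ fderiv ℂ (u i) c) l (𝓝 g')) : HasFDerivAt g g' c := by
  refine hasFDerivAt_of_eventually_norm_sub_le (C := 4 * M / r ^ 2) ?_
  filter_upwards [ball_mem_nhds c hr] with z hz
  have hremainder : Tendsto (fun i ↦ u i z - u i c - fderiv ℂ (u i) c (z - c)) l
      (𝓝 (g z - g c - g' (z - c))) :=
    ((hlim z hz).sub (hlim c (mem_ball_self hr))).sub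
      (((ContinuousLinearMap.apply ℂ F (z - c)).continuous.tendsto g').comp hlim')
  refine le_of_tendsto hremainder.norm ?_
  filter_upwards [hu, hM] with i hui hMi
  exact (norm_taylor_remainder_le_of_forall_mem_ball_norm_le hui hMi hz).trans_eq (by ring)

theorem differentiableOn_of_tendstoUniformlyOn [l.NeBot] [CompleteSpace F] (hs : IsOpen s)
    (hu : ∀ᶠ i in l, DifferentiableOn ℂ (u i) s) (hlim : TendstoUniformlyOn u g l s) :
    DifferentiableOn ℂ g s := by
  intro c hc
  have hg : ContinuousAt g c :=
    (hlim.continuousOn (hu.mono fun _ hi ↦ hi.continuousOn).frequently).continuousAt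
      (hs.mem_nhds hc)
  obtain ⟨r, hr, M, hrs, hM⟩ := exists_ball_subset_forall_norm_le (hs.mem_nhds hc) hg
  have hur : ∀ᶠ i in l, DifferentiableOn ℂ (u i) (ball c r) := hu.mono fun _ hi ↦ hi.mono hrs
  have huM : ∀ᶠ i in l, ∀ x ∈ ball c r, ‖u i x‖ ≤ 1 + M := by
    filter_upwards [Metric.tendstoUniformlyOn_iff.1 hlim 1 one_pos] with i hi x hx
    have hdist : ‖u i x - g x‖ < 1 := by simpa only [dist_comm, dist_eq_norm] using hi x (hrs hx)
    linarith [norm_le_norm_sub_add (u i x) (g x), hM x hx]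
  obtain ⟨g', hg'⟩ := CompleteSpace.complete
    (cauchy_map_fderiv_of_tendstoUniformlyOn hr hur (hlim.mono hrs))
  exact (hasFDerivAt_of_tendsto_of_forall_norm_le hr hur huM
    (fun x hx ↦ hlim.tendsto_at (hrs hx)) hg').differentiableAt.differentiableWithinAt

end Weierstrass

theorem norm_add_sub_sub_fderiv_le_of_mem_ball_half (hf : DifferentiableOn ℂ f (ball c r))
    (hM : ∀ x ∈ ball c r, ‖f x‖ ≤ M) {x h : E} (hx : x ∈ ball c (r / 2)) (hh : ‖h‖ < r / 2) :
    ‖f (x + h) - f x - fderiv ℂ f x h‖ ≤ 16 * M / r ^ 2 * ‖h‖ ^ 2 := by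
  have hsub := ball_half_subset _ hx
  have h_taylor := norm_taylor_remainder_le_of_forall_mem_ball_norm_le (hf.mono hsub)
    (fun y hy ↦ hM y (hsub hy)) (z := x + h) (by simpa using hh)
  rw [add_sub_cancel_left] at h_taylor
  exact h_taylor.trans_eq (by ring)

theorem tendstoUniformlyOn_inv_smul_sub_fderiv_apply (hr : 0 < r)
    (hf : DifferentiableOn ℂ f (ball c r)) (hM : ∀ x ∈ ball c r, ‖f x‖ ≤ M) (v : E) :
    TendstoUniformlyOn (fun (t : ℂ) z ↦ t⁻¹ • (f (z + t • v) - f z)) (fun z ↦ fderiv ℂ f z v)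
      (𝓝[≠] 0) (ball c (r / 2)) := by
  refine Metric.tendstoUniformlyOn_iff.2 fun ε hε ↦ ?_
  have herror : ∀ᶠ t : ℂ in 𝓝[≠] 0, 16 * M / r ^ 2 * ‖v‖ ^ 2 * ‖t‖ < ε :=
    (Continuous.tendsto' (by fun_prop) 0 0 (by simp)).mono_left nhdsWithin_le_nhds
      |>.eventually_lt_const hε
  filter_upwards [eventually_norm_smul_lt v (half_pos hr), herror, self_mem_nhdsWithin]
    with t ht htε ht0 z hz
  refine lt_of_le_of_lt ?_ htε
  have hquotient : t⁻¹ • (f (z + t • v) - f z) - fderiv ℂ f z v =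
      t⁻¹ • (f (z + t • v) - f z - fderiv ℂ f z (t • v)) := by
    rw [map_smul, smul_sub t⁻¹ (_ - _), inv_smul_smul₀ ht0]
  calc dist (fderiv ℂ f z v) (t⁻¹ • (f (z + t • v) - f z))
      = ‖t‖⁻¹ * ‖f (z + t • v) - f z - fderiv ℂ f z (t • v)‖ := by
        rw [dist_comm, dist_eq_norm, hquotient, norm_smul, norm_inv]
    _ ≤ ‖t‖⁻¹ * (16 * M / r ^ 2 * ‖t • v‖ ^ 2) := by
        gcongr
        exact norm_add_sub_sub_fderiv_le_of_mem_ball_half hf hM hz ht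
    _ = 16 * M / r ^ 2 * ‖v‖ ^ 2 * ‖t‖ := by
        have := norm_ne_zero_iff.2 ht0
        rw [norm_smul]
        field

theorem differentiableOn_fderiv_apply [CompleteSpace F] (hs : IsOpen s)
    (hf : DifferentiableOn ℂ f s) (v : E) : DifferentiableOn ℂ (fun z ↦ fderiv ℂ f z v) s := by
  intro c hc
  obtain ⟨r, hr, M, hrs, hM⟩ := exists_ball_subset_forall_norm_le (hs.mem_nhds hc)
    (hf.differentiableAt (hs.mem_nhds hc)).continuousAt
  have hfr := hf.mono hrs
  have hquotient : ∀ᶠ t : ℂ in 𝓝[≠] 0,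
      DifferentiableOn ℂ (fun z ↦ t⁻¹ • (f (z + t • v) - f z)) (ball c (r / 2)) := by
    filter_upwards [eventually_norm_smul_lt v (half_pos hr)] with t ht
    have htranslate : DifferentiableOn ℂ (fun z ↦ f (z + t • v)) (ball c (r / 2)) :=
      hfr.comp (by fun_prop) fun z hz ↦ add_mem_ball_of_mem_ball_half hz ht
    exact (htranslate.sub (hfr.mono (ball_subset_ball (half_le_self hr.le)))).const_smul _
  exact ((differentiableOn_of_tendstoUniformlyOn isOpen_ball hquotient
    (tendstoUniformlyOn_inv_smul_sub_fderiv_apply hr hfr hM v)).differentiableAt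
    (ball_mem_nhds c (half_pos hr))).differentiableWithinAt

theorem exists_clm_eq_fderiv_clm_apply {G : Type*} [NormedAddCommGroup G] [NormedSpace ℂ G]
    {g : E → G →L[ℂ] F} (hr : 0 < r)
    (hg : ∀ v, DifferentiableOn ℂ (fun z ↦ g z v) (ball c r)) (hM : ∀ x ∈ ball c r, ‖g x‖ ≤ M) :
    ∃ D : G →L[ℂ] E →L[ℂ] F, ∀ v, D v = fderiv ℂ (fun z ↦ g z v) c := by
  have hgc (v : G) : DifferentiableAt ℂ (fun z ↦ g z v) c :=
    (hg v).differentiableAt (ball_mem_nhds c hr)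
  let D : G →ₗ[ℂ] E →L[ℂ] F :=
    { toFun v := fderiv ℂ (fun z ↦ g z v) c
      map_add' v w := by simpa only [map_add] using fderiv_fun_add (hgc v) (hgc w)
      map_smul' a v := by
        simpa only [map_smul, RingHom.id_apply] using fderiv_fun_const_smul (hgc v) a }
  have hD (v : G) : ‖D v‖ ≤ 2 * M / r * ‖v‖ :=
    (norm_fderiv_le_of_forall_mem_ball_norm_le hr (hg v)
      fun x hx ↦ (g x).le_of_opNorm_le (hM x hx) v).trans_eq (by ring)
  exact ⟨D.mkContinuous _ hD, fun _ ↦ rfl⟩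

theorem norm_fderiv_add_sub_sub_fderiv_apply_le (hr : 0 < r)
    (hf : DifferentiableOn ℂ f (ball c r)) (hM : ∀ x ∈ ball c r, ‖f x‖ ≤ M) {h : E}
    (hf' : DifferentiableOn ℂ (fun z ↦ fderiv ℂ f z h) (ball c r)) (hh : ‖h‖ < r / 2) :
    ‖fderiv ℂ f (c + h) - fderiv ℂ f c - fderiv ℂ (fun z ↦ fderiv ℂ f z h) c‖ ≤
      64 * M / r ^ 3 * ‖h‖ ^ 2 := by
  have hremainder (x : E) (hx : x ∈ ball c (r / 2)) :
      HasFDerivAt (fun x ↦ f (x + h) - f x - fderiv ℂ f x h)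
        (fderiv ℂ f (x + h) - fderiv ℂ f x - fderiv ℂ (fun z ↦ fderiv ℂ f z h) x) x := by
    have hxr : ball c r ∈ 𝓝 x :=
      isOpen_ball.mem_nhds (ball_subset_ball (half_le_self hr.le) hx)
    have hxh : ball c r ∈ 𝓝 (x + h) :=
      isOpen_ball.mem_nhds (add_mem_ball_of_mem_ball_half hx hh)
    exact (((hasFDerivAt_comp_add_right h).2 (hf.differentiableAt hxh).hasFDerivAt).sub
      (hf.differentiableAt hxr).hasFDerivAt).sub (hf'.differentiableAt hxr).hasFDerivAt
  rw [← (hremainder c (mem_ball_self (half_pos hr))).fderiv]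
  exact (norm_fderiv_le_of_forall_mem_ball_norm_le (half_pos hr)
    (fun x hx ↦ (hremainder x hx).differentiableAt.differentiableWithinAt)
    fun x hx ↦ norm_add_sub_sub_fderiv_le_of_mem_ball_half hf hM hx hh).trans_eq (by ring)

theorem differentiableOn_fderiv [CompleteSpace F] (hs : IsOpen s) (hf : DifferentiableOn ℂ f s) :
    DifferentiableOn ℂ (fderiv ℂ f) s := by
  intro c hc
  obtain ⟨r, hr, M, hrs, hM⟩ := exists_ball_subset_forall_norm_le (hs.mem_nhds hc)
    (hf.differentiableAt (hs.mem_nhds hc)).continuousAt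
  have hfr := hf.mono hrs
  have hfr' (v : E) : DifferentiableOn ℂ (fun z ↦ fderiv ℂ f z v) (ball c r) :=
    differentiableOn_fderiv_apply isOpen_ball hfr v
  have hf'M : ∀ x ∈ ball c (r / 2), ‖fderiv ℂ f x‖ ≤ 2 * M / (r / 2) := fun x hx ↦
    norm_fderiv_le_of_forall_mem_ball_norm_le (half_pos hr)
      (hfr.mono (ball_half_subset _ hx)) fun y hy ↦ hM y (ball_half_subset _ hx hy)
  obtain ⟨D, hD⟩ := exists_clm_eq_fderiv_clm_apply (half_pos hr)
    (fun v ↦ (hfr' v).mono (ball_subset_ball (half_le_self hr.le))) hf'M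
  suffices HasFDerivAt (fderiv ℂ f) D c from this.differentiableAt.differentiableWithinAt
  refine hasFDerivAt_of_eventually_norm_sub_le (C := 64 * M / r ^ 3) ?_
  filter_upwards [ball_mem_nhds c (half_pos hr)] with z hz
  simpa only [hD, add_sub_cancel] using
    norm_fderiv_add_sub_sub_fderiv_apply_le hr hfr hM (hfr' (z - c)) (mem_ball_iff_norm.1 hz)

end Holomorphic

section MeanValue

variable {𝕜 E F : Type*} [RCLike 𝕜] [NormedAddCommGroup E] [NormedSpace 𝕜 E]
  [NormedAddCommGroup F] [NormedSpace 𝕜 F] {s : Set E}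

theorem setOf_lipschitz_bound_eq_upperBounds_norm_fderiv [NormedSpace ℝ E] {f : E → F}
    (hs : IsOpen s) (hconv : Convex ℝ s) (hne : s.Nonempty) (hf : DifferentiableOn 𝕜 f s) :
    {K : ℝ | 0 ≤ K ∧ ∀ x ∈ s, ∀ y ∈ s, ‖f x - f y‖ ≤ K * ‖x - y‖} =
      upperBounds {r : ℝ | ∃ z ∈ s, r = ‖fderiv 𝕜 f z‖} := by
  ext K
  constructor
  · rintro ⟨hK, hlip⟩ _ ⟨z, hz, rfl⟩
    refine norm_fderiv_le_of_lip' 𝕜 hK ?_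
    filter_upwards [hs.mem_nhds hz] with x hx using hlip x hx z hz
  · intro hK
    have hbound : ∀ z ∈ s, ‖fderiv 𝕜 f z‖ ≤ K := fun z hz ↦ hK ⟨z, hz, rfl⟩
    obtain ⟨z, hz⟩ := hne
    exact ⟨(norm_nonneg _).trans (hbound z hz), fun x hx y hy ↦
      hconv.norm_image_sub_le_of_norm_fderiv_le
        (fun z hz ↦ hf.differentiableAt (hs.mem_nhds hz)) hbound hy hx⟩

theorem sInf_lipschitz_bound_eq_sSup_norm_fderiv [NormedSpace ℝ E] {f : E → F} {K : NNReal}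
    (hs : IsOpen s) (hconv : Convex ℝ s) (hne : s.Nonempty) (hf : DifferentiableOn 𝕜 f s)
    (hK : LipschitzOnWith K f s) :
    sInf {K : ℝ | 0 ≤ K ∧ ∀ x ∈ s, ∀ y ∈ s, ‖f x - f y‖ ≤ K * ‖x - y‖} =
      sSup {r : ℝ | ∃ z ∈ s, r = ‖fderiv 𝕜 f z‖} := by
  have hset := setOf_lipschitz_bound_eq_upperBounds_norm_fderiv hs hconv hne hf
  have hbdd : BddAbove {r : ℝ | ∃ z ∈ s, r = ‖fderiv 𝕜 f z‖} :=
    ⟨K, hset ▸ ⟨K.2, fun x hx y hy ↦ hK.norm_sub_le hx hy⟩⟩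
  rw [hset, csInf_upperBounds_eq_csSup hbdd (hne.elim fun z hz ↦ ⟨_, z, hz, rfl⟩)]

end MeanValue

theorem dense_span_range_of_tendsto_sum {R M : Type*} [Semiring R] [AddCommMonoid M] [Module R M]
    [TopologicalSpace M] {e : ℕ → M}
    (he : ∀ x, ∃ a : ℕ → R, Tendsto (fun N ↦ ∑ n ∈ Finset.range N, a n • e n) atTop (𝓝 x)) :
    Dense (Submodule.span R (range e) : Set M) := by
  intro x
  obtain ⟨a, ha⟩ := he x
  exact mem_closure_of_tendsto ha <| .of_forall fun N ↦ Submodule.sum_mem _ fun n _ ↦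
    Submodule.smul_mem _ _ (Submodule.subset_span (mem_range_self n))

theorem apply_comm_of_dense_span {𝕜 E F ι : Type*} [NontriviallyNormedField 𝕜]
    [NormedAddCommGroup E] [NormedSpace 𝕜 E] [NormedAddCommGroup F] [NormedSpace 𝕜 F]
    {e : ι → E} (he : Dense (Submodule.span 𝕜 (range e) : Set E)) {D : E →L[𝕜] E →L[𝕜] F}
    (hD : ∀ i j, D (e i) (e j) = D (e j) (e i)) (x y : E) :
    D x y = D y x := by
  have hflip : D = D.flip := by
    refine ContinuousLinearMap.ext_on he ?_
    rintro _ ⟨i, rfl⟩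
    refine ContinuousLinearMap.ext_on he ?_
    rintro _ ⟨j, rfl⟩
    exact hD i j
  exact DFunLike.congr_fun (DFunLike.congr_fun hflip x) y

section Main

variable {X F ι : Type*} [NormedAddCommGroup X] [NormedSpace ℂ X]
  [NormedAddCommGroup F] [NormedSpace ℂ F] {U : Set X}

/-- Membership in `𝓗𝓛₀(U, F)`: the holomorphic Lipschitz maps on `U` vanishing at the origin. Maps
on `U` are encoded as maps on all of `X`, with no condition outside `U`. -/
def IsHolomorphicLipschitzZero (U : Set X) (f : X → F) : Prop :=
  DifferentiableOn ℂ f U ∧ f 0 = 0 ∧ ∃ K : NNReal, LipschitzOnWith K f U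

/-- Membership in `𝓗^∞_s(U, L(X, F))`: the bounded holomorphic maps `g` on `U` with
`e_j ∘ d(e_i ∘ g) = e_i ∘ d(e_j ∘ g)` on `U` for all `i`, `j`, where `e_i ∘ g` stands for
`u ↦ g u (e i)`. -/
def IsBoundedHolomorphicSymm (U : Set X) (e : ι → X) (g : X → X →L[ℂ] F) : Prop :=
  DifferentiableOn ℂ g U ∧ (∃ C : ℝ, ∀ z ∈ U, ‖g z‖ ≤ C) ∧
    ∀ i j, ∀ z ∈ U, fderiv ℂ (fun u ↦ g u (e i)) z (e j) = fderiv ℂ (fun u ↦ g u (e j)) z (e i)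

theorem isBoundedHolomorphicSymm_fderiv [CompleteSpace F] (hU : IsOpen U) (e : ι → X) {f : X → F}
    (hf : IsHolomorphicLipschitzZero U f) : IsBoundedHolomorphicSymm U e (fderiv ℂ f) := by
  obtain ⟨hd, -, K, hK⟩ := hf
  have hd' := differentiableOn_fderiv hU hd
  refine ⟨hd', ⟨K, fun z hz ↦ norm_fderiv_le_of_lipschitzOn ℂ (hU.mem_nhds hz) hK⟩,
    fun i j z hz ↦ ?_⟩
  have hdz := hd'.differentiableAt (hU.mem_nhds hz)
  have hf_near : ∀ᶠ y in 𝓝 z, HasFDerivAt f (fderiv ℂ f y) y := by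
    filter_upwards [hU.mem_nhds hz] with y hy
    exact (hd.differentiableAt (hU.mem_nhds hy)).hasFDerivAt
  rw [fderiv_clm_apply_const hdz, fderiv_clm_apply_const hdz]
  exact second_derivative_symmetric_of_eventually hf_near hdz.hasFDerivAt _ _

theorem exists_primitive_of_isBoundedHolomorphicSymm [CompleteSpace F] (hU : IsOpen U)
    (hconv : Convex ℝ U) {e : ι → X} (he : Dense (Submodule.span ℂ (range e) : Set X))
    {g : X → X →L[ℂ] F} (hg : IsBoundedHolomorphicSymm U e g) :
    ∃ f, IsHolomorphicLipschitzZero U f ∧ ∀ z ∈ U, fderiv ℂ f z = g z := by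
  obtain ⟨hd, ⟨C, hC⟩, hsymm⟩ := hg
  have hdat : ∀ z ∈ U, DifferentiableAt ℂ g z := fun z hz ↦ hd.differentiableAt (hU.mem_nhds hz)
  have hclosed : ∀ z ∈ U, ∀ x y, fderiv ℂ g z x y = fderiv ℂ g z y x := fun z hz ↦
    apply_comm_of_dense_span he fun i j ↦ by
      simpa only [fderiv_clm_apply_const (hdat z hz)] using hsymm j i z hz
  obtain ⟨f₀, hf₀⟩ := hconv.exists_forall_hasFDerivAt_of_fderiv_symmetric hU
    (hd.restrictScalars ℝ)
    fun z hz ↦ by simpa only [(hdat z hz).fderiv_restrictScalars ℝ] using! hclosed z hz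
  have hf : ∀ z ∈ U, HasFDerivAt (fun z ↦ f₀ z - f₀ 0) (g z) z := fun z hz ↦
    (hf₀ z hz).sub_const _
  have hlip : LipschitzOnWith C.toNNReal (fun z ↦ f₀ z - f₀ 0) U :=
    hconv.lipschitzOnWith_of_nnnorm_hasFDerivWithin_le
      (fun z hz ↦ (hf z hz).hasFDerivWithinAt) fun z hz ↦ NNReal.le_toNNReal_of_coe_le (hC z hz)
  exact ⟨_, ⟨fun z hz ↦ (hf z hz).differentiableAt.differentiableWithinAt, sub_self _, _, hlip⟩,
    fun z hz ↦ (hf z hz).fderiv⟩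

theorem stmt11_general [CompleteSpace F] (hU : IsOpen U) (hconv : Convex ℝ U) (h0 : 0 ∈ U)
    (e : ι → X) (he : Dense (Submodule.span ℂ (range e) : Set X)) :
    (∀ f : X → F, IsHolomorphicLipschitzZero U f → IsBoundedHolomorphicSymm U e (fderiv ℂ f)) ∧
    (∀ f : X → F, IsHolomorphicLipschitzZero U f →
      sInf {K : ℝ | 0 ≤ K ∧ ∀ x ∈ U, ∀ y ∈ U, ‖f x - f y‖ ≤ K * ‖x - y‖} =
        sSup {r : ℝ | ∃ z ∈ U, r = ‖fderiv ℂ f z‖}) ∧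
    (∀ g : X → X →L[ℂ] F, IsBoundedHolomorphicSymm U e g →
      ∃ f, IsHolomorphicLipschitzZero U f ∧ ∀ z ∈ U, fderiv ℂ f z = g z) :=
  ⟨fun _ ↦ isBoundedHolomorphicSymm_fderiv hU e,
    fun _ ⟨hf, _, _, hK⟩ ↦ sInf_lipschitz_bound_eq_sSup_norm_fderiv hU hconv ⟨0, h0⟩ hf hK,
    fun _ ↦ exists_primitive_of_isBoundedHolomorphicSymm hU hconv he⟩

end Main

/-- Let `X` be a complex Banach space with a Schauder basis `{eₙ}`.  Then
`Φ : 𝓗𝓛₀(B_X) → 𝓗^∞_s(B_X, X*)`, `Φ f = df`, is a surjective isometry, where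
`𝓗^∞_s(B_X, X*) = {g ∈ 𝓗^∞(B_X, X*) : e_k ∘ d(e_n ∘ g) = e_n ∘ d(e_k ∘ g) ∀ n, k}`. -/
theorem stmt11 (X : Type*) [NormedAddCommGroup X] [NormedSpace ℂ X] [CompleteSpace X]
    (e : ℕ → X)
    (hbasis : ∀ x : X, ∃! a : ℕ → ℂ,
      Filter.Tendsto (fun N => ∑ n ∈ Finset.range N, a n • e n) Filter.atTop (nhds x)) :
    let B := Metric.ball (0 : X) 1
    let HL0 : (X → ℂ) → Prop := fun f =>
      DifferentiableOn ℂ f B ∧ f 0 = 0 ∧ ∃ K : NNReal, LipschitzOnWith K f B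
    let Hs : (X → (X →L[ℂ] ℂ)) → Prop := fun g =>
      DifferentiableOn ℂ g B ∧ (∃ C : ℝ, ∀ z ∈ B, ‖g z‖ ≤ C) ∧
      ∀ n m : ℕ, ∀ z ∈ B,
        fderiv ℂ (fun u => g u (e n)) z (e m) = fderiv ℂ (fun u => g u (e m)) z (e n)
    (∀ f : X → ℂ, HL0 f → Hs (fun z => fderiv ℂ f z)) ∧
    (∀ f : X → ℂ, HL0 f →
      sInf {K : ℝ | 0 ≤ K ∧ ∀ x ∈ B, ∀ y ∈ B, ‖f x - f y‖ ≤ K * ‖x - y‖} =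
        sSup {r : ℝ | ∃ z ∈ B, r = ‖fderiv ℂ f z‖}) ∧
    (∀ g : X → (X →L[ℂ] ℂ), Hs g →
      ∃ f : X → ℂ, HL0 f ∧ ∀ z ∈ B, fderiv ℂ f z = g z) := by
  exact stmt11_general isOpen_ball (convex_ball _ _) (mem_ball_self one_pos) e
    (dense_span_range_of_tendsto_sum fun x ↦ (hbasis x).exists)
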